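/- Stepping-up lemma: M(n+1, q+2) ≥ M(n,q)! and F(n+1, q+2) ≥ M(n,q), where S(n,q) is the set of words w over an alphabet of size q that avoid Z_n and have a distinguished letter d such that every infix of w not containing d avoids Z_{n-1}; M(n,q) = |S(n,q)| and F(n,q) is the maximum length of a word in S(n,q). -/

import Mathlib

/-- Zimin words over the alphabet `ℕ`. -/
def Zimin : ℕ → List ℕ
  | 0 => []
  | n + 1 => Zimin n ++ [n + 1] ++ Zimin n

/-- `X` is a copy of `Z_n`: it is obtained by substituting a nonempty word for
each letter of the Zimin word `Z_n`. -/
def IsZiminCopy {α : Type*} (n : ℕ) (X : List α) : Prop :=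
  ∃ σ : ℕ → List α, (∀ i, σ i ≠ []) ∧ X = (Zimin n).flatMap σ

/-- `w` contains a copy of `Z_n` as a contiguous subword (infix). -/
def ContainsZimin {α : Type*} (n : ℕ) (w : List α) : Prop :=
  ∃ X : List α, IsZiminCopy n X ∧ X <:+: w

/-- `S(n,q)`: words `w` over `Fin q` avoiding `Z_n` which have a distinguished
letter `d` such that every infix of `w` not containing `d` avoids `Z_{n-1}`. -/
def ZiminS (n q : ℕ) : Set (List (Fin q)) :=
  {w | ¬ ContainsZimin n w ∧ ∃ d : Fin q,
    ∀ v : List (Fin q), v <:+: w → d ∉ v → ¬ ContainsZimin (n - 1) v}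

/-- `M(n,q) = |S(n,q)|`. -/
noncomputable def ZiminM (n q : ℕ) : ℕ := (ZiminS n q).ncard

/-- `F(n,q)`: the largest length of a word in `S(n,q)`. -/
noncomputable def ZiminF (n q : ℕ) : ℕ :=
  sSup {L | ∃ w ∈ ZiminS n q, w.length = L}

/-!
Write a list of distinct words of `S(n,q)` as one word, ending each block with a new separator. Let
`X Y X` be a copy of `Z_{n+1}` in it. The blocks avoid `Z_n`, so the copy `X` of `Z_n` contains the
separator. If it did so twice, the block between two separators in `X` would occur twice in the
list. If it does so once, then `X` begins and ends with the same copy `A` of `Z_{n-1}`, on either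
side of the separator, so the two occurrences of `X` show that two consecutive blocks and a later
block all contain `A`. When `n ≥ 3` this is prevented by recolouring the distinguished letter in
every other word, because `A` has to contain that letter. As the distinguished letter depends on
the word, it is also written in front of the recoloured word, so that the list can be read off from
the joined word. When `n = 2` no recolouring is needed, as at most two words of `S(2,q)` contain a
given letter.
-/

section Lists

variable {α β : Type*}

theorem prefix_of_prefix_append_cons {c : α} {u x y : List α} (hc : c ∉ u)
    (h : u <+: x ++ c :: y) : u <+: x := by
  rcases List.prefix_or_prefix_of_prefix h (x.prefix_append (c :: y)) with h' | ⟨v, rfl⟩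
  · exact h'
  · rw [List.prefix_append_right_inj, List.prefix_cons_iff] at h
    rcases h with rfl | ⟨v', rfl, -⟩
    · simp
    · simp at hc

theorem suffix_of_suffix_append_cons {c : α} {u x y : List α} (hc : c ∉ u)
    (h : u <:+ x ++ c :: y) : u <:+ y := by
  rcases List.suffix_or_suffix_of_suffix h (List.suffix_append x (c :: y)) with h' | h'
  · rcases List.suffix_cons_iff.1 h' with rfl | h'
    · simp at hc
    · exact h'
  · exact absurd (h'.subset (by simp)) hc

theorem infix_or_infix_of_infix_append_cons {c : α} {u x y : List α} (hc : c ∉ u)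
    (h : u <:+: x ++ c :: y) : u <:+: x ∨ u <:+: y := by
  have eq_nil {v : List α} (hv : c ∉ v) (h : v <+: c :: y) : v = [] :=
    List.prefix_nil.1 (prefix_of_prefix_append_cons (x := []) hv h)
  rcases List.infix_append_iff.1 h with h | h | ⟨l₁, l₂, rfl, h₁, h₂⟩
  · exact .inl h
  · rcases List.infix_cons_iff.1 h with h | h
    · simp [eq_nil hc h]
    · exact .inr h
  · rw [List.mem_append, not_or] at hc
    simpa [eq_nil hc.2 h₂] using .inl h₁.isInfix

theorem prefix_and_suffix_of_append_append_eq {c : α} {A z u v : List α} (hu : c ∉ u)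
    (hv : c ∉ v) (h : A ++ z ++ A = u ++ c :: v) : A <+: u ∧ A <:+ v := by
  have split_eq {x y : List α} (hxy : A ++ z ++ A = x ++ c :: y) : u = x ∧ v = y := by
    simpa using (List.append_cons_inj_of_notMem hu hv).1 (h.symm.trans hxy)
  have hA : c ∉ A := by
    intro hA
    obtain ⟨A₁, A₂, rfl⟩ := List.append_of_mem hA
    obtain ⟨-, rfl⟩ := split_eq (x := A₁) (y := A₂ ++ z ++ (A₁ ++ c :: A₂)) (by simp)
    simp at hv
  have hz : c ∈ z := by
    have : c ∈ A ++ z ++ A := by simp [h]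
    simpa [hA] using this
  obtain ⟨z₁, z₂, rfl⟩ := List.append_of_mem hz
  obtain ⟨rfl, rfl⟩ := split_eq (x := A ++ z₁) (y := z₂ ++ A) (by simp)
  exact ⟨List.prefix_append .., List.suffix_append ..⟩

theorem infix_of_map_infix_map {f : α → β} (hf : Function.Injective f) {u v : List α}
    (h : u.map f <:+: v.map f) : u <:+: v := by
  obtain ⟨u', hu', huu'⟩ := List.infix_map_iff.1 h
  rwa [hf.list_map huu']

theorem exists_eq_append_of_duplicate {x : α} {L : List α} (h : List.Duplicate x L) :
    ∃ L₁ L₂ L₃, L = L₁ ++ x :: (L₂ ++ x :: L₃) := by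
  induction h with
  | cons_mem hx =>
    obtain ⟨L₂, L₃, rfl⟩ := List.append_of_mem hx
    exact ⟨[], L₂, L₃, rfl⟩
  | @cons_duplicate y L _ ih =>
    obtain ⟨L₁, L₂, L₃, rfl⟩ := ih
    exact ⟨y :: L₁, L₂, L₃, rfl⟩

theorem exists_eq_flatMap_ofFn_append (k m : ℕ) (w : List α) (hw : m * k ≤ w.length) :
    ∃ (L : List (Fin k → α)) (t : List α), L.length = m ∧ w = L.flatMap List.ofFn ++ t := by
  induction m generalizing w with
  | zero => exact ⟨[], w, rfl, rfl⟩
  | succ m ih =>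
    rw [Nat.succ_mul] at hw
    obtain ⟨L, t, hL, ht⟩ := ih (w.drop k) (by simp; omega)
    refine ⟨(fun i => w[i]) :: L, t, by simp [hL], ?_⟩
    have hk : List.ofFn (fun i : Fin k => w[i]) = w.take k := by
      apply List.ext_getElem <;> grind
    rw [List.flatMap_cons, List.append_assoc, ← ht, hk, List.take_append_drop]

theorem factorial_ncard_le_ncard {S : Set α} {T : Set β} (hS : S.Finite) (hT : T.Finite)
    {Φ : List α → β} (hΦ : Function.Injective Φ)
    (hmaps : ∀ l : List α, l.Nodup → (∀ a ∈ l, a ∈ S) → Φ l ∈ T) :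
    S.ncard.factorial ≤ T.ncard := by
  classical
  have hnodup := hS.toFinset.nodup_toList
  calc S.ncard.factorial
      = (hS.toFinset.toList.permutations.toFinset : Set (List α)).ncard := by
        rw [Set.ncard_coe_finset, List.toFinset_card_of_nodup (List.nodup_permutations _ hnodup),
          List.length_permutations, Finset.length_toList, Set.ncard_eq_toFinset_card S hS]
    _ ≤ T.ncard := by
        refine Set.ncard_le_ncard_of_injOn Φ (fun l hl => ?_) hΦ.injOn hT
        have hperm : l.Perm hS.toFinset.toList := by simpa using hl
        exact hmaps l (hperm.nodup_iff.2 hnodup) fun a ha => by simpa using hperm.subset ha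

end Lists

section ZiminCopies

variable {α β : Type*} {n : ℕ}

theorem le_of_mem_Zimin {k : ℕ} (hk : k ∈ Zimin n) : k ≤ n := by
  induction n with
  | zero => simp [Zimin] at hk
  | succ n ih =>
    simp only [Zimin, List.mem_append, List.mem_singleton] at hk
    grind

theorem isZiminCopy_succ_iff {X : List α} :
    IsZiminCopy (n + 1) X ↔ ∃ A z, z ≠ [] ∧ IsZiminCopy n A ∧ X = A ++ z ++ A := by
  constructor
  · rintro ⟨σ, hσ, rfl⟩
    exact ⟨(Zimin n).flatMap σ, σ (n + 1), hσ _, ⟨σ, hσ, rfl⟩, by simp [Zimin]⟩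
  · rintro ⟨_, z, hz, ⟨σ, hσ, rfl⟩, rfl⟩
    refine ⟨Function.update σ (n + 1) z, fun i => ?_, ?_⟩
    · rcases eq_or_ne i (n + 1) with rfl | hi
      · simpa using hz
      · simpa [Function.update_of_ne hi] using hσ i
    · have : (Zimin n).flatMap (Function.update σ (n + 1) z) = (Zimin n).flatMap σ :=
        List.flatMap_congr fun k hk =>
          Function.update_of_ne (Nat.lt_succ_of_le (le_of_mem_Zimin hk)).ne z σ
      simp [Zimin, this]

theorem isZiminCopy_one_iff {X : List α} : IsZiminCopy 1 X ↔ X ≠ [] :=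
  ⟨fun ⟨σ, hσ, hX⟩ => by simp [hX, Zimin, hσ],
    fun hX => ⟨fun _ => X, fun _ => hX, by simp [Zimin]⟩⟩

theorem IsZiminCopy.ne_nil (hn : 1 ≤ n) {X : List α} (hX : IsZiminCopy n X) : X ≠ [] := by
  obtain ⟨m, rfl⟩ := Nat.exists_eq_add_of_le' hn
  obtain ⟨A, z, hz, -, rfl⟩ := isZiminCopy_succ_iff.1 hX
  simp [hz]

theorem IsZiminCopy.of_map (hn : 1 ≤ n) {f : α → β} (hf : Function.Injective f) {v : List α}
    (hv : IsZiminCopy n (v.map f)) : IsZiminCopy n v := by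
  induction n, hn using Nat.le_induction generalizing v with
  | base => simpa [isZiminCopy_one_iff] using hv
  | succ n _ ih =>
    obtain ⟨_, _, hz, hA, hX⟩ := isZiminCopy_succ_iff.1 hv
    obtain ⟨_, A, rfl, hAz, rfl⟩ := List.map_eq_append_iff.1 hX
    obtain ⟨A', z, rfl, hA', rfl⟩ := List.map_eq_append_iff.1 hAz
    obtain rfl := hf.list_map hA'
    exact isZiminCopy_succ_iff.2 ⟨A', z, by simpa using hz, ih hA, rfl⟩

theorem IsZiminCopy.exists_of_infix_map (hn : 1 ≤ n) {f : α → β} (hf : Function.Injective f)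
    {X : List β} {w : List α} (hX : IsZiminCopy n X) (hXw : X <:+: w.map f) :
    ∃ v, IsZiminCopy n v ∧ v <:+: w ∧ X = v.map f := by
  obtain ⟨v, hv, rfl⟩ := List.infix_map_iff.1 hXw
  exact ⟨v, hX.of_map hn hf, hv, rfl⟩

-- The letter `a` occurs only once in `a :: w`, while the first letter of a copy recurs in it.
theorem IsZiminCopy.infix_of_infix_cons (hn : 2 ≤ n) {a : α} {w X : List α} (ha : a ∉ w)
    (hX : IsZiminCopy n X) (hXw : X <:+: a :: w) : X <:+: w := by
  refine (List.infix_cons_iff.1 hXw).resolve_left fun hpre => ?_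
  obtain ⟨m, rfl⟩ := Nat.exists_eq_add_of_le' (one_le_two.trans hn)
  obtain ⟨A, z, -, hA, rfl⟩ := isZiminCopy_succ_iff.1 hX
  obtain ⟨b, A, rfl⟩ := List.exists_cons_of_ne_nil (hA.ne_nil (by omega))
  simp only [List.cons_append, List.append_assoc, List.cons_prefix_cons] at hpre
  obtain ⟨rfl, hpre⟩ := hpre
  exact ha (hpre.subset (by simp))

theorem ContainsZimin.mono {v w : List α} (hv : ContainsZimin n v) (hvw : v <:+: w) :
    ContainsZimin n w := by
  obtain ⟨X, hX, hXv⟩ := hv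
  exact ⟨X, hX, hXv.trans hvw⟩

theorem ContainsZimin.of_map (hn : 1 ≤ n) {f : α → β} (hf : Function.Injective f) {w : List α}
    (hw : ContainsZimin n (w.map f)) : ContainsZimin n w := by
  obtain ⟨X, hX, hXw⟩ := hw
  obtain ⟨v, hv, hvw, -⟩ := hX.exists_of_infix_map hn hf hXw
  exact ⟨v, hv, hvw⟩

theorem ContainsZimin.append_append {u z : List α} (hu : ContainsZimin n u) (hz : z ≠ []) :
    ContainsZimin (n + 1) (u ++ z ++ u) := by
  obtain ⟨A, hA, s, t, rfl⟩ := hu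
  exact ⟨A ++ (t ++ z ++ s) ++ A, isZiminCopy_succ_iff.2 ⟨A, _, by simp [hz], hA, rfl⟩,
    s, t, by simp⟩

theorem not_containsZimin_nil (hn : 1 ≤ n) : ¬ ContainsZimin n ([] : List α) :=
  fun ⟨_, hX, h⟩ => hX.ne_nil hn (List.infix_nil.1 h)

theorem exists_containsZimin_of_le_length (α : Type*) [Finite α] (n : ℕ) :
    ∃ N, ∀ w : List α, N ≤ w.length → ContainsZimin n w := by
  have := Fintype.ofFinite α
  classical
  induction n with
  | zero =>
    refine ⟨1, fun w hw => ⟨[], ⟨fun _ => w, fun _ => ?_, rfl⟩, List.nil_infix⟩⟩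
    exact List.ne_nil_of_length_pos hw
  | succ n ih =>
    obtain ⟨N, hN⟩ := ih
    let m := Fintype.card (Fin (N + 1) → α) + 1
    refine ⟨m * (N + 1), fun w hw => ?_⟩
    obtain ⟨L, t, hL, rfl⟩ := exists_eq_flatMap_ofFn_append (N + 1) m w hw
    have hdup : ¬ L.Nodup := fun h => by have := h.length_le_card; omega
    obtain ⟨g, hg⟩ := List.exists_duplicate_iff_not_nodup.2 hdup
    obtain ⟨L₁, L₂, L₃, rfl⟩ := exists_eq_append_of_duplicate hg
    -- Only the last `N` letters of a chunk are needed, so that something remains in between.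
    let u := List.ofFn fun i => g (Fin.succ i)
    let z := L₂.flatMap List.ofFn ++ [g 0]
    have hu : ContainsZimin n u := hN u (by simp [u])
    exact (hu.append_append (z := z) (by simp [z])).mono
      ⟨L₁.flatMap List.ofFn ++ [g 0], L₃.flatMap List.ofFn ++ t, by
        simp [u, z, List.ofFn_succ]⟩

end ZiminCopies

section ZiminS

variable {n q : ℕ}

theorem exists_length_lt_of_mem_ZiminS (n q : ℕ) : ∃ N, ∀ w ∈ ZiminS n q, w.length < N := by
  obtain ⟨N, hN⟩ := exists_containsZimin_of_le_length (Fin q) n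
  exact ⟨N, fun w hw => not_le.1 fun h => hw.1 (hN w h)⟩

theorem finite_ZiminS (n q : ℕ) : (ZiminS n q).Finite := by
  obtain ⟨N, hN⟩ := exists_length_lt_of_mem_ZiminS n q
  exact (List.finite_length_lt (Fin q) N).subset hN

theorem length_le_ZiminF {w : List (Fin q)} (hw : w ∈ ZiminS n q) : w.length ≤ ZiminF n q := by
  obtain ⟨N, hN⟩ := exists_length_lt_of_mem_ZiminS n q
  refine le_csSup ⟨N, ?_⟩ ⟨w, hw, rfl⟩
  rintro _ ⟨v, hv, rfl⟩
  exact (hN v hv).le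

/-- `d` is a distinguished letter of `w` at level `n`: it occurs in every copy of `Z_n` in `w`.
For words over `Fin q` this is the condition on `d` in `ZiminS (n + 1) q`. -/
def IsDistinguished {α : Type*} (n : ℕ) (w : List α) (d : α) : Prop :=
  ∀ X, IsZiminCopy n X → X <:+: w → d ∈ X

theorem mem_ZiminS_succ_iff {w : List (Fin q)} :
    w ∈ ZiminS (n + 1) q ↔ ¬ ContainsZimin (n + 1) w ∧ ∃ d, IsDistinguished n w d := by
  refine and_congr_right' (exists_congr fun d => ⟨fun h X hX hXw => ?_, ?_⟩)
  · by_contra hd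
    exact h X hXw hd ⟨X, hX, List.infix_rfl⟩
  · rintro h v hvw hd ⟨X, hX, hXv⟩
    exact hd (hXv.subset (h X hX (hXv.trans hvw)))

theorem nil_mem_ZiminS_succ (hn : 1 ≤ n) [Nonempty (Fin q)] : [] ∈ ZiminS (n + 1) q :=
  mem_ZiminS_succ_iff.2 ⟨not_containsZimin_nil (by omega), Classical.arbitrary _,
    fun _ hX h => absurd (List.infix_nil.1 h) (hX.ne_nil hn)⟩

end ZiminS

section JoinBlocks

variable {β : Type*}

/-- The concatenation of a list of blocks over `β`, each followed by the separator `none`. -/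
def joinBlocks (L : List (List β)) : List (Option β) := L.flatMap fun b => b.map some ++ [none]

@[simp]
theorem joinBlocks_nil : joinBlocks ([] : List (List β)) = [] := rfl

@[simp]
theorem joinBlocks_cons (b : List β) (L : List (List β)) :
    joinBlocks (b :: L) = b.map some ++ none :: joinBlocks L := by
  simp [joinBlocks]

theorem length_le_length_joinBlocks (L : List (List β)) : L.length ≤ (joinBlocks L).length := by
  induction L with
  | nil => simp
  | cons b L ih =>
    simp only [joinBlocks_cons, List.length_append, List.length_cons]
    omega

theorem exists_append_cons_of_joinBlocks_eq {L : List (List β)} {P R : List (Option β)}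
    (h : joinBlocks L = P ++ none :: R) :
    ∃ L₁ b L₂, L = L₁ ++ b :: L₂ ∧ joinBlocks L₁ ++ b.map some = P ∧ joinBlocks L₂ = R := by
  induction L generalizing P with
  | nil => simp at h
  | cons b L ih =>
    rw [joinBlocks_cons, List.append_eq_append_iff] at h
    rcases h with ⟨_ | ⟨c, P'⟩, rfl, hP'⟩ | ⟨_ | ⟨c, b'⟩, hb', h⟩
    · exact ⟨[], b, L, rfl, by simp, by simpa using hP'⟩
    · obtain ⟨rfl, hL⟩ : none = c ∧ joinBlocks L = P' ++ none :: R := by simpa using hP'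
      obtain ⟨L₁, b₁, L₂, rfl, rfl, rfl⟩ := ih hL
      exact ⟨b :: L₁, b₁, L₂, rfl, by simp, rfl⟩
    · exact ⟨[], b, L, rfl, by simpa using hb', by simpa using h.symm⟩
    · obtain ⟨rfl, -⟩ : none = c ∧ R = b' ++ none :: joinBlocks L := by simpa using h
      have : none ∈ b.map some := by simp [hb']
      simp at this

theorem exists_cons_of_joinBlocks_eq {L : List (List β)} {u R : List (Option β)}
    (hu : none ∉ u) (h : joinBlocks L = u ++ none :: R) :
    ∃ b L', L = b :: L' ∧ b.map some = u ∧ joinBlocks L' = R := by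
  obtain ⟨_ | ⟨b₁, L₁⟩, b, L₂, rfl, rfl, rfl⟩ := exists_append_cons_of_joinBlocks_eq h
  · exact ⟨b, L₂, rfl, rfl, rfl⟩
  · simp at hu

theorem joinBlocks_injective : Function.Injective (joinBlocks (β := β)) := by
  intro L L' h
  induction L' generalizing L with
  | nil =>
    cases L with
    | nil => rfl
    | cons b L => simp at h
  | cons b' L' ih =>
    obtain ⟨b, L, rfl, hb, hL⟩ :=
      exists_cons_of_joinBlocks_eq (by simp) (h.trans (joinBlocks_cons b' L'))
    rw [ih hL, (Option.some_injective β).list_map hb]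

theorem suffix_of_suffix_joinBlocks_append {L : List (List β)} {u x : List (Option β)}
    (hu : none ∉ u) (h : u <:+ joinBlocks L ++ x) : u <:+ x := by
  induction L with
  | nil => exact h
  | cons b L ih =>
    rw [joinBlocks_cons, List.append_assoc, List.cons_append] at h
    exact ih (suffix_of_suffix_append_cons hu h)

theorem exists_infix_map_of_infix_joinBlocks {L : List (List β)} {u : List (Option β)}
    (hu : none ∉ u) (hu₀ : u ≠ []) (h : u <:+: joinBlocks L) : ∃ b ∈ L, u <:+: b.map some := by
  induction L with
  | nil => exact absurd (List.infix_nil.1 h) hu₀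
  | cons b L ih =>
    rw [joinBlocks_cons] at h
    rcases infix_or_infix_of_infix_append_cons hu h with h | h
    · exact ⟨b, by simp, h⟩
    · obtain ⟨b', hb', h'⟩ := ih h
      exact ⟨b', by simp [hb'], h'⟩

theorem exists_consecutive_of_joinBlocks_eq {L : List (List β)} {P u v R : List (Option β)}
    (hu : none ∉ u) (hv : none ∉ v) (hv₀ : v ≠ [])
    (h : joinBlocks L = P ++ u ++ none :: (v ++ R)) :
    ∃ L₁ b₁ b₂ L₂, L = L₁ ++ b₁ :: b₂ :: L₂ ∧ joinBlocks (b₂ :: L₂) = v ++ R ∧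
      u <:+ b₁.map some ∧ v <+: b₂.map some := by
  obtain ⟨L₁, b₁, _ | ⟨b₂, L₂⟩, rfl, hP, hL₂⟩ := exists_append_cons_of_joinBlocks_eq h
  · simp [hv₀] at hL₂
  · refine ⟨L₁, b₁, b₂, L₂, rfl, hL₂, ?_, ?_⟩
    · exact suffix_of_suffix_joinBlocks_append hu (hP.symm ▸ List.suffix_append ..)
    · exact prefix_of_prefix_append_cons hv (joinBlocks_cons b₂ L₂ ▸ hL₂ ▸ List.prefix_append ..)

theorem not_nodup_of_joinBlocks_eq {L : List (List β)} {P v Q R : List (Option β)}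
    (hv : none ∉ v)
    (h : joinBlocks L = P ++ none :: (v ++ none :: (Q ++ none :: (v ++ none :: R)))) :
    ¬ L.Nodup := by
  obtain ⟨L₁, b₁, _, rfl, -, h₂⟩ := exists_append_cons_of_joinBlocks_eq h
  obtain ⟨b, _, rfl, hb, h₃⟩ := exists_cons_of_joinBlocks_eq hv h₂
  obtain ⟨L₂, b₂, _, rfl, -, h₄⟩ := exists_append_cons_of_joinBlocks_eq h₃
  obtain ⟨b', L₃, rfl, hb', -⟩ := exists_cons_of_joinBlocks_eq hv h₄
  obtain rfl := (Option.some_injective β).list_map (hb.trans hb'.symm)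
  simp [List.nodup_append]

end JoinBlocks

section LinkedBlocks

variable {β : Type*} {n : ℕ}

/-- Two consecutive blocks and a later one share a copy of `Z_n`. Under the hypotheses of
`hasLinkedBlocks_of_containsZimin_joinBlocks` this is the only way in which joining blocks can
create a copy of `Z_{n+2}`. -/
def HasLinkedBlocks (n : ℕ) (L : List (List β)) : Prop :=
  ∃ A L₁ b₁ b₂ L₂ b₃, IsZiminCopy n A ∧ L = L₁ ++ b₁ :: b₂ :: L₂ ∧ b₃ ∈ L₂ ∧
    A <:+: b₁ ∧ A <:+: b₂ ∧ A <:+: b₃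

theorem isDistinguished_none_joinBlocks (hn : 1 ≤ n) {L : List (List β)}
    (hL : ∀ b ∈ L, ¬ ContainsZimin n b) : IsDistinguished n (joinBlocks L) none := by
  intro X hX hXL
  by_contra hnone
  obtain ⟨b, hb, hXb⟩ := exists_infix_map_of_infix_joinBlocks hnone (hX.ne_nil hn) hXL
  exact hL b hb (.of_map hn (Option.some_injective β) ⟨X, hX, hXb⟩)

theorem hasLinkedBlocks_of_joinBlocks_eq (hn : 1 ≤ n) {L : List (List β)}
    {A u v P Y Q : List (Option β)} (hu : none ∉ u) (hv : none ∉ v) (hA : IsZiminCopy n A)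
    (hAu : A <+: u) (hAv : A <:+ v)
    (h : joinBlocks L = P ++ u ++ none :: (v ++ (Y ++ u ++ none :: (v ++ Q)))) :
    HasLinkedBlocks n L := by
  have hv₀ : v ≠ [] := fun h => hA.ne_nil hn (List.suffix_nil.1 (h ▸ hAv))
  obtain ⟨L₁, b₁, b₂, L₂, rfl, h₂, hub₁, hvb₂⟩ := exists_consecutive_of_joinBlocks_eq hu hv hv₀ h
  obtain ⟨L₃, _, b₃, L₄, hL₂, -, -, hvb₃⟩ := exists_consecutive_of_joinBlocks_eq
    (P := v ++ Y) (R := Q) hu hv hv₀ (h₂.trans (by simp))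
  have hb₃ : b₃ ∈ L₂ := by
    cases L₃ with
    | nil => simp [(List.cons.inj hL₂).2]
    | cons b L₃ => simp [(List.cons.inj hL₂).2]
  have some_inj := Option.some_injective β
  obtain ⟨A', hA', hAb₁, rfl⟩ :=
    hA.exists_of_infix_map hn some_inj (hAu.isInfix.trans hub₁.isInfix)
  exact ⟨A', L₁, b₁, b₂, L₂, b₃, hA', rfl, hb₃, hAb₁,
    infix_of_map_infix_map some_inj (hAv.isInfix.trans hvb₂.isInfix),
    infix_of_map_infix_map some_inj (hAv.isInfix.trans hvb₃.isInfix)⟩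

theorem hasLinkedBlocks_of_containsZimin_joinBlocks (hn : 1 ≤ n) {L : List (List β)}
    (hL : L.Nodup) (havoid : ∀ b ∈ L, ¬ ContainsZimin (n + 1) b)
    (h : ContainsZimin (n + 2) (joinBlocks L)) : HasLinkedBlocks n L := by
  obtain ⟨_, hcopy, P, Q, hPQ⟩ := h
  obtain ⟨X, Y, -, hX, rfl⟩ := isZiminCopy_succ_iff.1 hcopy
  have hnone : none ∈ X := isDistinguished_none_joinBlocks (by omega) havoid X hX
    ⟨P, Y ++ X ++ Q, by simp [← hPQ]⟩
  obtain ⟨u, v, rfl, hu⟩ := List.eq_append_cons_of_mem hnone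
  by_cases hv : none ∈ v
  · obtain ⟨v, w, rfl, hv'⟩ := List.eq_append_cons_of_mem hv
    exact absurd hL (not_nodup_of_joinBlocks_eq (P := P ++ u) (Q := w ++ Y ++ u) (R := w ++ Q) hv'
      (by simp [← hPQ]))
  · obtain ⟨A, z, -, hA, huv⟩ := isZiminCopy_succ_iff.1 hX
    obtain ⟨hAu, hAv⟩ := prefix_and_suffix_of_append_append_eq hu hv huv.symm
    exact hasLinkedBlocks_of_joinBlocks_eq hn hu hv hA hAu hAv (P := P) (Y := Y) (Q := Q)
      (by simp [← hPQ])

end LinkedBlocks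

section Encoding

theorem IsDistinguished.map {α β : Type*} {n : ℕ} (hn : 1 ≤ n) {f : α → β}
    (hf : Function.Injective f) {w : List α} {d : α} (hd : IsDistinguished n w d) :
    IsDistinguished n (w.map f) (f d) := by
  intro X hX hXw
  obtain ⟨v, hv, hvw, rfl⟩ := hX.exists_of_infix_map hn hf hXw
  exact List.mem_map_of_mem (hd v hv hvw)

theorem map_mem_ZiminS_succ {α : Type*} {n q : ℕ} (hn : 1 ≤ n) {f : α → Fin q}
    (hf : Function.Injective f) {w : List α} {d : α} (hw : ¬ ContainsZimin (n + 1) w)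
    (hd : IsDistinguished n w d) : w.map f ∈ ZiminS (n + 1) q :=
  mem_ZiminS_succ_iff.2 ⟨fun h => hw (h.of_map (by omega) hf), f d, hd.map hn hf⟩

theorem map_joinBlocks_mem_ZiminS {β : Type*} {n q : ℕ} (hn : 1 ≤ n) {f : Option β → Fin q}
    (hf : Function.Injective f) {L : List (List β)} (hL : L.Nodup)
    (havoid : ∀ b ∈ L, ¬ ContainsZimin (n + 1) b) (hlink : ¬ HasLinkedBlocks n L) :
    (joinBlocks L).map f ∈ ZiminS (n + 2) q :=
  map_mem_ZiminS_succ (by omega) hf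
    (fun h => hlink (hasLinkedBlocks_of_containsZimin_joinBlocks hn hL havoid h))
    (isDistinguished_none_joinBlocks (by omega) havoid)

theorem factorial_ncard_le_ZiminM_and_ncard_le_ZiminF {α β : Type*} {n q : ℕ} (hn : 1 ≤ n)
    {f : Option β → Fin q} (hf : Function.Injective f) {S : Set α} (hS : S.Finite)
    (blocks : List α → List (List β)) (decode : List β → α)
    (hdecode : ∀ l, (blocks l).map decode = l)
    (havoid : ∀ l, (∀ a ∈ l, a ∈ S) → ∀ b ∈ blocks l, ¬ ContainsZimin (n + 1) b)
    (hlink : ∀ l, l.Nodup → (∀ a ∈ l, a ∈ S) → ¬ HasLinkedBlocks n (blocks l)) :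
    S.ncard.factorial ≤ ZiminM (n + 2) q ∧ S.ncard ≤ ZiminF (n + 2) q := by
  have hmaps (l : List α) (hl : l.Nodup) (hlS : ∀ a ∈ l, a ∈ S) :
      (joinBlocks (blocks l)).map f ∈ ZiminS (n + 2) q :=
    map_joinBlocks_mem_ZiminS hn hf (.of_map decode ((hdecode l).symm ▸ hl)) (havoid l hlS)
      (hlink l hl hlS)
  have hblocks : Function.Injective blocks := Function.LeftInverse.injective hdecode
  have hinj : Function.Injective fun l => (joinBlocks (blocks l)).map f :=
    hf.list_map.comp (joinBlocks_injective.comp hblocks)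
  refine ⟨factorial_ncard_le_ncard hS (finite_ZiminS _ _) hinj hmaps, ?_⟩
  let l := hS.toFinset.toList
  calc S.ncard = ((blocks l).map decode).length := by
        rw [hdecode, Finset.length_toList, Set.ncard_eq_toFinset_card S hS]
    _ ≤ ((joinBlocks (blocks l)).map f).length := by
        simpa using length_le_length_joinBlocks (blocks l)
    _ ≤ ZiminF (n + 2) q :=
        length_le_ZiminF (hmaps l (Finset.nodup_toList _) fun a ha => by simpa [l] using ha)

end Encoding

section BaseCases

variable {n q : ℕ}

theorem ZiminS_one_eq_empty (q : ℕ) : ZiminS 1 q = ∅ := by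
  refine Set.eq_empty_of_forall_notMem fun w hw => ?_
  obtain ⟨d, hd⟩ := hw.2
  exact hd [] List.nil_infix List.not_mem_nil ⟨[], ⟨fun _ => [d], by simp, rfl⟩, List.nil_infix⟩

theorem stepping_up_of_eq_empty (hn : 1 ≤ n) (h : ZiminS n q = ∅) :
    (ZiminM n q).factorial ≤ ZiminM (n + 1) (q + 2) ∧ ZiminM n q ≤ ZiminF (n + 1) (q + 2) := by
  have hM : ZiminM n q = 0 := by simp [ZiminM, h]
  have hpos : 0 < ZiminM (n + 1) (q + 2) :=
    (Set.ncard_pos (finite_ZiminS _ _)).2 ⟨[], nil_mem_ZiminS_succ hn⟩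
  simpa [hM] using Nat.succ_le_of_lt hpos

theorem eq_singleton_or_eq_pair {α : Type*} {w : List α} {a d : α}
    (hw : ¬ ContainsZimin 2 w) (hd : IsDistinguished 1 w d) (ha : a ∈ w) :
    w = [a] ∨ w = [a, a] := by
  have eq_d (x : α) (hx : x ∈ w) : x = d := by
    have : d ∈ [x] := hd [x] (isZiminCopy_one_iff.2 (by simp)) ((List.singleton_infix_iff x w).2 hx)
    exact (List.mem_singleton.1 this).symm
  obtain rfl := eq_d a ha
  match w, ha with
  | [x], _ => simp [eq_d x]
  | [x, y], _ => simp [eq_d x, eq_d y]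
  | x :: y :: z :: w, _ =>
    refine absurd ⟨[x] ++ [y] ++ [x], isZiminCopy_succ_iff.2 ⟨[x], [y], by simp, ?_, rfl⟩, ?_⟩ hw
    · exact isZiminCopy_one_iff.2 (by simp)
    · exact ⟨[], w, by simp [eq_d x, eq_d y, eq_d z]⟩

theorem not_hasLinkedBlocks_one {β : Type*} {L : List (List β)} (hL : L.Nodup)
    (havoid : ∀ b ∈ L, ¬ ContainsZimin 2 b) (hdist : ∀ b ∈ L, ∃ d, IsDistinguished 1 b d) :
    ¬ HasLinkedBlocks 1 L := by
  rintro ⟨A, L₁, b₁, b₂, L₂, b₃, hA, rfl, hb₃, h₁, h₂, h₃⟩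
  obtain ⟨a, ha⟩ := List.exists_mem_of_ne_nil A (hA.ne_nil le_rfl)
  have eq_or_eq (b) (hb : b ∈ L₁ ++ b₁ :: b₂ :: L₂) (hab : A <:+: b) : b = [a] ∨ b = [a, a] :=
    eq_singleton_or_eq_pair (havoid b hb) (hdist b hb).choose_spec (hab.subset ha)
  have := eq_or_eq b₁ (by simp) h₁
  have := eq_or_eq b₂ (by simp) h₂
  have := eq_or_eq b₃ (by simp [hb₃]) h₃
  have : b₁ ≠ b₂ ∧ b₁ ≠ b₃ ∧ b₂ ≠ b₃ := by
    simp only [List.nodup_append, List.nodup_cons, List.mem_cons, not_or] at hL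
    grind
  grind

theorem stepping_up_two (q : ℕ) :
    (ZiminM 2 q).factorial ≤ ZiminM 3 (q + 2) ∧ ZiminM 2 q ≤ ZiminF 3 (q + 2) := by
  let e : Option (Option (Fin q)) ≃ Fin (q + 2) := Fintype.equivFinOfCardEq (by simp)
  have some_inj := Option.some_injective (Fin q)
  have havoid (l : List (List (Fin q))) (hl : ∀ w ∈ l, w ∈ ZiminS 2 q) :
      ∀ b ∈ l.map (List.map some), ¬ ContainsZimin 2 b :=
    List.forall_mem_map.2 fun w hw h => (hl w hw).1 (h.of_map one_le_two some_inj)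
  refine factorial_ncard_le_ZiminM_and_ncard_le_ZiminF le_rfl e.injective (finite_ZiminS 2 q)
    (fun l => l.map (List.map some)) (List.filterMap id) (by simp [Function.comp_def]) havoid
    fun l hl hlS => not_hasLinkedBlocks_one (hl.map some_inj.list_map) (havoid l hlS) ?_
  refine List.forall_mem_map.2 fun w hw => ?_
  obtain ⟨-, d, hd⟩ := mem_ZiminS_succ_iff.1 (hlS w hw)
  exact ⟨some d, hd.map le_rfl some_inj⟩

end BaseCases

section AlternateMap

variable {α β : Type*} {f g : α → β}

/-- Apply `f` to the entries of the list in positions 0, 2, 4, …, and `g` to the others. -/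
def alternateMap (f g : α → β) : List α → List β
  | [] => []
  | a :: l => f a :: alternateMap g f l

theorem map_alternateMap {h : β → α} (hf : Function.LeftInverse h f)
    (hg : Function.LeftInverse h g) (l : List α) : (alternateMap f g l).map h = l := by
  induction l generalizing f g with
  | nil => rfl
  | cons a l ih => simp [alternateMap, hf a, ih hg hf]

theorem forall_mem_alternateMap {p : β → Prop} {l : List α} (hf : ∀ a ∈ l, p (f a))
    (hg : ∀ a ∈ l, p (g a)) : ∀ b ∈ alternateMap f g l, p b := by
  induction l generalizing f g with
  | nil => simp [alternateMap]
  | cons a l ih =>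
    rw [List.forall_mem_cons] at hf hg
    exact List.forall_mem_cons.2 ⟨hf.1, ih hg.2 hf.2⟩

theorem isChain_alternateMap {R : β → β → Prop} {l : List α}
    (hfg : ∀ a ∈ l, ∀ a' ∈ l, R (f a) (g a')) (hgf : ∀ a ∈ l, ∀ a' ∈ l, R (g a) (f a')) :
    (alternateMap f g l).IsChain R := by
  induction l generalizing f g with
  | nil => simp [alternateMap]
  | cons a l ih =>
    have ih := @ih g f (fun x hx y hy => hgf x (by simp [hx]) y (by simp [hy]))
      (fun x hx y hy => hfg x (by simp [hx]) y (by simp [hy]))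
    cases l with
    | nil => simp [alternateMap]
    | cons a' l => exact List.isChain_cons_cons.2 ⟨hfg a (by simp) a' (by simp), ih⟩

end AlternateMap

section Recoloring

variable {α : Type*} [DecidableEq α] {n : ℕ}

/-- The embedding of `α` into `Option α` which sends `c` to the new letter `none`. In the notation
of the construction, `none` is `c₁` and `some c` is `c₀`. -/
def recolor (c : α) : α → Option α := Function.update some c none

theorem recolor_self (c : α) : recolor c c = none := by simp [recolor]

theorem recolor_of_ne {c x : α} (h : x ≠ c) : recolor c x = some x := by simp [recolor, h]

theorem getD_recolor (c x : α) : (recolor c x).getD c = x := by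
  rcases eq_or_ne x c with rfl | hx <;> simp [recolor_self, recolor_of_ne, *]

theorem recolor_injective (c : α) : Function.Injective (recolor c) :=
  Function.LeftInverse.injective (g := fun y : Option α => y.getD c) (getD_recolor c)

/-- The word `w` with its letter `c` recoloured to `none`. The letter `c` varies with `w`, so it is
recorded in front of the recoloured word, which would otherwise not determine `w`. -/
def tag (c : α) (w : List α) : List (Option α) :=
  if c ∈ w then some c :: w.map (recolor c) else w.map (recolor c)

/-- Recovers `w` both from `w.map some` and from `tag c w`. -/
def untag : List (Option α) → List α
  | some c :: v => if none ∈ v then v.map (·.getD c) else c :: v.map (·.getD c)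
  | _ => []

theorem untag_map_some (w : List α) : untag (w.map some) = w := by
  cases w <;> simp [untag, Function.comp_def]

theorem untag_tag (c : α) (w : List α) : untag (tag c w) = w := by
  by_cases hc : c ∈ w
  · have hnone : none ∈ w.map (recolor c) := List.mem_map.2 ⟨c, hc, recolor_self c⟩
    simp [tag, untag, hc, hnone, Function.comp_def, getD_recolor]
  · have hmap : w.map (recolor c) = w.map some :=
      List.map_congr_left fun x hx => recolor_of_ne (ne_of_mem_of_not_mem hx hc)
    rw [tag, if_neg hc, hmap, untag_map_some]

theorem IsZiminCopy.exists_of_infix_tag (hn : 2 ≤ n) {c : α} {w : List α} {X : List (Option α)}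
    (hX : IsZiminCopy n X) (hXw : X <:+: tag c w) :
    ∃ v, IsZiminCopy n v ∧ v <:+: w ∧ X = v.map (recolor c) := by
  refine hX.exists_of_infix_map (by omega) (recolor_injective c) ?_
  rw [tag] at hXw
  split_ifs at hXw
  · refine hX.infix_of_infix_cons hn ?_ hXw
    intro hc
    obtain ⟨x, -, hx⟩ := List.mem_map.1 hc
    rcases eq_or_ne x c with rfl | hxc
    · simp [recolor_self] at hx
    · simp [recolor_of_ne hxc, hxc] at hx
  · exact hXw

theorem ContainsZimin.of_tag (hn : 2 ≤ n) {c : α} {w : List α}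
    (h : ContainsZimin n (tag c w)) : ContainsZimin n w := by
  obtain ⟨X, hX, hXw⟩ := h
  obtain ⟨v, hv, hvw, -⟩ := hX.exists_of_infix_tag hn hXw
  exact ⟨v, hv, hvw⟩

theorem IsDistinguished.none_tag (hn : 2 ≤ n) {c : α} {w : List α}
    (hc : IsDistinguished n w c) : IsDistinguished n (tag c w) none := by
  intro X hX hXw
  obtain ⟨v, hv, hvw, rfl⟩ := hX.exists_of_infix_tag hn hXw
  exact List.mem_map.2 ⟨c, hc v hv hvw, recolor_self c⟩

/-- The blocks encoding the list `l`: in every other word `w` the letter `c w`, which is meant to be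
a distinguished letter of `w`, is recoloured. -/
def recoloredBlocks (c : List α → α) (l : List (List α)) : List (List (Option α)) :=
  alternateMap (List.map some) (fun w => tag (c w) w) l

theorem map_untag_recoloredBlocks (c : List α → α) (l : List (List α)) :
    (recoloredBlocks c l).map untag = l :=
  map_alternateMap untag_map_some (fun w => untag_tag (c w) w) l

theorem not_containsZimin_of_mem_recoloredBlocks (hn : 2 ≤ n) {c : List α → α}
    {l : List (List α)} (hl : ∀ w ∈ l, ¬ ContainsZimin n w) :
    ∀ b ∈ recoloredBlocks c l, ¬ ContainsZimin n b :=
  forall_mem_alternateMap (fun w hw h => hl w hw (h.of_map (by omega) (Option.some_injective α)))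
    fun w hw h => hl w hw (h.of_tag hn)

theorem not_hasLinkedBlocks_recoloredBlocks (hn : 2 ≤ n) {c : List α → α} {l : List (List α)}
    (hc : ∀ w ∈ l, IsDistinguished n w (c w)) : ¬ HasLinkedBlocks n (recoloredBlocks c l) := by
  have not_common {w w' : List α} {A : List (Option α)} (hA : IsZiminCopy n A) (hw' : w' ∈ l)
      (h : A <:+: w.map some) (h' : A <:+: tag (c w') w') : False := by
    have hnone : none ∈ w.map some := h.subset ((hc w' hw').none_tag hn A hA h')
    simp at hnone
  have hchain : (recoloredBlocks c l).IsChain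
      fun b b' => ∀ A, IsZiminCopy n A → A <:+: b → ¬ A <:+: b' :=
    isChain_alternateMap (fun _ _ _ hw' A hA h h' => not_common hA hw' h h')
      fun _ hw _ _ A hA h h' => not_common hA hw h' h
  rintro ⟨A, L₁, b₁, b₂, L₂, -, hA, hL, -, h₁, h₂, -⟩
  rw [hL, List.isChain_append_cons_cons] at hchain
  exact hchain.2.1 A hA h₁ h₂

end Recoloring

theorem stepping_up_succ_of_two_le {n q : ℕ} (hn : 2 ≤ n) [Nonempty (Fin q)] :
    (ZiminM (n + 1) q).factorial ≤ ZiminM (n + 2) (q + 2) ∧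
      ZiminM (n + 1) q ≤ ZiminF (n + 2) (q + 2) := by
  let e : Option (Option (Fin q)) ≃ Fin (q + 2) := Fintype.equivFinOfCardEq (by simp)
  have hdist : ∀ w ∈ ZiminS (n + 1) q, ∃ c, IsDistinguished n w c :=
    fun w hw => (mem_ZiminS_succ_iff.1 hw).2
  choose! c hc using hdist
  exact factorial_ncard_le_ZiminM_and_ncard_le_ZiminF (by omega) e.injective (finite_ZiminS _ _)
    (recoloredBlocks c) untag (map_untag_recoloredBlocks c)
    (fun l hl => not_containsZimin_of_mem_recoloredBlocks (by omega) fun w hw => (hl w hw).1)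
    fun l _ hl => not_hasLinkedBlocks_recoloredBlocks hn fun w hw => hc w (hl w hw)

/-- Stepping-up lemma: `M(n+1, q+2) ≥ M(n,q)!` and `F(n+1, q+2) ≥ M(n,q)`. -/
theorem stepping_up (n q : ℕ) (hn : 1 ≤ n) :
    (ZiminM n q).factorial ≤ ZiminM (n + 1) (q + 2) ∧
    ZiminM n q ≤ ZiminF (n + 1) (q + 2) := by
  rcases (ZiminS n q).eq_empty_or_nonempty with hempty | ⟨w, hw⟩
  · exact stepping_up_of_eq_empty hn hempty
  · have : Nonempty (Fin q) := hw.2.nonempty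
    match n, hn with
    | 1, _ => simp [ZiminS_one_eq_empty] at hw
    | 2, _ => exact stepping_up_two q
    | n + 3, _ => exact stepping_up_succ_of_two_le (by omega)
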